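/- For every integer n ≥ 3, every prime graph on n vertices contains a prime induced subgraph on n−1 or n−2 vertices. -/

import Mathlib

/-!
The proof climbs from small prime induced subgraphs to large ones.

* A prime graph with at least three vertices contains an induced path on four vertices
  (`exists_path`). Fix a vertex `v`. If no such path exists, each component of the graph induced on
  the non-neighbours of `v` is a module of `G`, so the non-neighbours form a stable set
  (`stable_of_no_path`); applied to the complement, this makes the neighbours a clique. In the
  resulting split graph the neighbourhoods of the non-neighbours of `v` are nested, so a minimal one
  yields an isolated or a dominating vertex, contrary to primality.
* (Ehrenfeucht–Rozenberg, `exists_extension`) If `G` is prime, `X` induces a prime subgraph with at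
  least three vertices and at least two vertices lie outside `X`, then `X ∪ {a, b}` induces a prime
  subgraph for some distinct `a, b ∉ X`. Suppose not. A vertex outside `X` may be uniform on `X`, or
  a twin over `X` of some `u ∈ X`, or neither. The lemmas `uniform_of_not_prime`,
  `twin_of_not_prime` and `pair_of_not_prime` show that the following are modules of `G`: the set of
  all vertices except those outside `X` that are uniform on `X`; the set of `u` and its twins; and,
  if both are trivial, the complement of `X`. One of them is nontrivial.

A largest prime induced subgraph with at least four and fewer than `n` vertices then cannot have
fewer than `n - 2` vertices. For `n ≤ 4`, two vertices suffice.
-/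


/-- A homogeneous set of a finite simple graph: a set `X` of vertices with
`2 ≤ |X| < |V|` such that every vertex outside `X` is complete or anticomplete to `X`. -/
def IsHomogeneousSet {V : Type*} [Fintype V] (G : SimpleGraph V) (X : Finset V) : Prop :=
  2 ≤ X.card ∧ X.card < Fintype.card V ∧
    ∀ v ∉ X, (∀ x ∈ X, G.Adj v x) ∨ (∀ x ∈ X, ¬ G.Adj v x)

/-- A graph is prime if it has no homogeneous set. -/
def IsPrimeGraph {V : Type*} [Fintype V] (G : SimpleGraph V) : Prop :=
  ¬ ∃ X : Finset V, IsHomogeneousSet G X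

namespace SchmerlTrotter

/-! ### Modules of induced subgraphs -/

variable {V : Type*}

/-- `M ∩ S` is a module of the subgraph induced on `S`: no vertex of `S` outside `M` distinguishes
two elements of it. Leaving out the condition `M ⊆ S` makes restriction to smaller `S` immediate. -/
def IsMod (G : SimpleGraph V) (S M : Set V) : Prop :=
  ∀ v ∈ S, v ∉ M → ∀ x ∈ M, x ∈ S → ∀ y ∈ M, y ∈ S → (G.Adj v x ↔ G.Adj v y)

/-- The subgraph induced on `S` has only trivial modules. -/
def PrimeOn (G : SimpleGraph V) (S : Set V) : Prop :=
  ∀ M, IsMod G S M → (∀ x ∈ M, x ∈ S → ∀ y ∈ M, y ∈ S → x = y) ∨ S ⊆ M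

theorem IsMod.mono {G : SimpleGraph V} {S T M : Set V} (h : IsMod G S M) (hT : T ⊆ S) :
    IsMod G T M :=
  fun v hv hvM x hx hxT y hy hyT => h v (hT hv) hvM x hx (hT hxT) y hy (hT hyT)

/-- `a` is complete or anticomplete to `X`. -/
def Uniform (G : SimpleGraph V) (X : Set V) (a : V) : Prop :=
  ∀ x ∈ X, ∀ y ∈ X, (G.Adj a x ↔ G.Adj a y)

/-- `a` and `u` have the same neighbours in `X \ {u}`. -/
def Twin (G : SimpleGraph V) (X : Set V) (u a : V) : Prop :=
  ∀ x ∈ X, x ≠ u → (G.Adj x a ↔ G.Adj x u)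

/-- `X` has at least three elements. -/
def Big (X : Set V) : Prop := ∀ u v : V, ∃ w ∈ X, w ≠ u ∧ w ≠ v

theorem PrimeOn.no_uniform {G : SimpleGraph V} {X : Set V} (hX : PrimeOn G X) (hb : Big X)
    {u : V} (hu : u ∈ X)
    (h : ∀ x ∈ X, x ≠ u → ∀ y ∈ X, y ≠ u → (G.Adj u x ↔ G.Adj u y)) : False := by
  obtain ⟨w, hw, hwu, -⟩ := hb u u
  obtain ⟨z, hz, hzu, hzw⟩ := hb u w
  rcases hX {x | x ≠ u} (by
    intro v hv hvM x hx hxS y hy hyS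
    have : v = u := by simpa using hvM
    subst this
    exact h x hxS hx y hyS hy) with h1 | h1
  · exact hzw (h1 z hzu hz w hwu hw)
  · exact h1 hu rfl

theorem PrimeOn.no_twin {G : SimpleGraph V} {X : Set V} (hX : PrimeOn G X) (hb : Big X)
    {u v : V} (hu : u ∈ X) (hv : v ∈ X) (huv : u ≠ v)
    (h : ∀ x ∈ X, x ≠ u → x ≠ v → (G.Adj x u ↔ G.Adj x v)) : False := by
  obtain ⟨w, hw, hwu, hwv⟩ := hb u v
  rcases hX {u, v} (by
    intro z hz hzM x hx hxS y hy hyS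
    have := h z hz
    simp only [Set.mem_insert_iff, Set.mem_singleton_iff] at hzM hx hy
    grind) with h1 | h1
  · exact huv (h1 u (by simp) hu v (by simp) hv)
  · have := h1 hw
    simp only [Set.mem_insert_iff, Set.mem_singleton_iff] at this
    grind

/-- A module meets a prime induced subgraph in no vertex, in one vertex, or in all of it. -/
theorem PrimeOn.trichotomy {G : SimpleGraph V} {X M : Set V} (hX : PrimeOn G X)
    (hM : IsMod G X M) :
    (∀ x ∈ X, x ∉ M) ∨ (∃ u ∈ X, u ∈ M ∧ ∀ x ∈ X, x ∈ M → x = u) ∨ X ⊆ M := by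
  rcases hX M hM with h | h
  · by_cases h0 : ∃ u ∈ X, u ∈ M
    · obtain ⟨u, hu, huM⟩ := h0
      exact Or.inr (Or.inl ⟨u, hu, huM, fun x hx hxM => h x hxM hx u huM hu⟩)
    · exact Or.inl fun x hx hxM => h0 ⟨x, hx, hxM⟩
  · exact Or.inr (Or.inr h)

/-- A module of `X ∪ {a, b}` containing all of `X` but missing `a` makes `a` uniform on `X`. -/
theorem IsMod.uniform {G : SimpleGraph V} {S X M : Set V} (hM : IsMod G S M) (hXS : X ⊆ S)
    (hX : X ⊆ M) {a : V} (ha : a ∈ S) (haM : a ∉ M) : Uniform G X a :=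
  fun x hx y hy => hM a ha haM x (hX hx) (hXS hx) y (hX hy) (hXS hy)

theorem IsMod.twin {G : SimpleGraph V} {S X M : Set V} (hM : IsMod G S M) (hXS : X ⊆ S)
    {u : V} (hu : u ∈ X) (huM : u ∈ M) (hX : ∀ x ∈ X, x ∈ M → x = u)
    {a : V} (ha : a ∈ S) (haM : a ∈ M) : Twin G X u a :=
  fun x hx hxu => hM x (hXS hx) (fun h => hxu (hX x hx h)) a haM ha u huM (hXS hu)

theorem PrimeOn.not_uniform_twin {G : SimpleGraph V} {X : Set V} (hX : PrimeOn G X) (hb : Big X)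
    {u a : V} (hu : u ∈ X) (h1 : Uniform G X a) (h2 : Twin G X u a) : False := by
  apply hX.no_uniform hb hu
  intro x hx hxu y hy hyu
  have e1 := h2 x hx hxu
  have e2 := h2 y hy hyu
  have e3 := h1 x hx y hy
  grind [G.adj_comm x a, G.adj_comm x u, G.adj_comm y a, G.adj_comm y u]

theorem PrimeOn.twin_unique {G : SimpleGraph V} {X : Set V} (hX : PrimeOn G X) (hb : Big X)
    {u v a : V} (hu : u ∈ X) (hv : v ∈ X) (h1 : Twin G X u a) (h2 : Twin G X v a) : u = v := by
  by_contra huv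
  exact hX.no_twin hb hu hv huv fun x hx hxu hxv => (h1 x hx hxu).symm.trans (h2 x hx hxv)

theorem not_primeOn {G : SimpleGraph V} {S : Set V} (h : ¬ PrimeOn G S) :
    ∃ M, IsMod G S M ∧ (∃ x ∈ M, x ∈ S ∧ ∃ y ∈ M, y ∈ S ∧ x ≠ y) ∧ ∃ z ∈ S, z ∉ M := by
  unfold PrimeOn at h
  push Not at h
  obtain ⟨M, h1, ⟨x, hx, hxS, y, hy, hyS, hxy⟩, h3⟩ := h
  exact ⟨M, h1, ⟨x, hx, hxS, y, hy, hyS, hxy⟩, Set.not_subset.1 h3⟩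

/-! ### Adding two vertices to a prime induced subgraph -/

section Extension

variable {G : SimpleGraph V} {X : Set V} {a b u : V}

/-- If `a` is uniform on `X` and `b` is not, then `X ∪ {b}` is the only possible obstruction to
primality of `X ∪ {a, b}`. -/
theorem uniform_of_not_prime (hX : PrimeOn G X) (hb : Big X)
    (h1 : Uniform G X a) (h2 : ¬ Uniform G X b) (h : ¬ PrimeOn G (insert a (insert b X))) :
    ∀ x ∈ X, (G.Adj a b ↔ G.Adj a x) := by
  obtain ⟨M, hM, ⟨p, hp, hpS, q, hq, hqS, hpq⟩, z, hzS, hz⟩ := not_primeOn h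
  have hXS : X ⊆ insert a (insert b X) := fun x hx => by simp [hx]
  have haS : a ∈ insert a (insert b X) := by simp
  have hbS : b ∈ insert a (insert b X) := by simp
  intro x hx
  rcases hX.trichotomy (hM.mono hXS) with h0 | ⟨v, hv, hvM, h0⟩ | h0
  · -- the module is `{a, b}`, so `b` is uniform on `X` along with `a`
    have hab : a ∈ M ∧ b ∈ M := by
      simp only [Set.mem_insert_iff] at hpS hqS
      grind
    refine absurd (fun y hy w hw => ?_) h2
    have e1 := hM y (hXS hy) (h0 y hy) a hab.1 haS b hab.2 hbS
    have e2 := hM w (hXS hw) (h0 w hw) a hab.1 haS b hab.2 hbS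
    rw [G.adj_comm b y, G.adj_comm b w, ← e1, ← e2, G.adj_comm y, G.adj_comm w]
    exact h1 y hy w hw
  · have haM : a ∉ M := fun haM =>
      hX.not_uniform_twin hb hv h1 (hM.twin hXS hv hvM h0 haS haM)
    have hbM : b ∈ M := by
      simp only [Set.mem_insert_iff] at hpS hqS
      grind
    exact (hM a haS haM b hbM hbS v hvM (hXS hv)).trans (h1 v hv x hx)
  · have hbM : b ∈ M := by
      by_contra hbM
      exact h2 (hM.uniform hXS h0 hbS hbM)
    have haM : a ∉ M := by
      simp only [Set.mem_insert_iff] at hzS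
      grind
    exact hM a haS haM b hbM hbS x (h0 hx) (hXS hx)

/-- If `a` is a twin of `u` and `b` is not, then `{u, a}` is the only possible obstruction to
primality of `X ∪ {a, b}`. -/
theorem twin_of_not_prime (hX : PrimeOn G X) (hb : Big X) (hu : u ∈ X)
    (h1 : Twin G X u a) (h2 : ¬ Twin G X u b) (h : ¬ PrimeOn G (insert a (insert b X))) :
    G.Adj b a ↔ G.Adj b u := by
  obtain ⟨M, hM, ⟨p, hp, hpS, q, hq, hqS, hpq⟩, z, hzS, hz⟩ := not_primeOn h
  have hXS : X ⊆ insert a (insert b X) := fun x hx => by simp [hx]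
  have haS : a ∈ insert a (insert b X) := by simp
  have hbS : b ∈ insert a (insert b X) := by simp
  rcases hX.trichotomy (hM.mono hXS) with h0 | ⟨v, hv, hvM, h0⟩ | h0
  · have hab : a ∈ M ∧ b ∈ M := by
      simp only [Set.mem_insert_iff] at hpS hqS
      grind
    refine absurd (fun y hy hyu => ?_) h2
    exact (hM y (hXS hy) (h0 y hy) b hab.2 hbS a hab.1 haS).trans (h1 y hy hyu)
  · by_cases haM : a ∈ M
    · have hvu : u = v := hX.twin_unique hb hu hv h1 (hM.twin hXS hv hvM h0 haS haM)
      subst hvu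
      have hbM : b ∉ M := fun hbM => h2 (hM.twin hXS hu hvM h0 hbS hbM)
      exact hM b hbS hbM a haM haS u hvM (hXS hu)
    · have hbM : b ∈ M := by
        simp only [Set.mem_insert_iff] at hpS hqS
        grind
      have hvu : v ≠ u := by
        rintro rfl
        exact h2 (hM.twin hXS hv hvM h0 hbS hbM)
      have huM : u ∉ M := fun huM => hvu (h0 u hu huM).symm
      have e1 := hM a haS haM b hbM hbS v hvM (hXS hv)
      have e2 := hM u (hXS hu) huM b hbM hbS v hvM (hXS hv)
      rw [G.adj_comm b a, G.adj_comm b u, e1, e2, G.adj_comm a, G.adj_comm u]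
      exact h1 v hv hvu
  · have haM : a ∈ M := by
      by_contra haM
      exact hX.not_uniform_twin hb hu (hM.uniform hXS h0 haS haM) h1
    have hbM : b ∉ M := by
      simp only [Set.mem_insert_iff] at hzS
      grind
    exact hM b hbS hbM a haM haS u (h0 hu) (hXS hu)

/-- If neither `a` nor `b` is uniform on `X` or a twin of an element of `X`, then `{a, b}` is the
only possible obstruction to primality of `X ∪ {a, b}`. -/
theorem pair_of_not_prime (hX : PrimeOn G X)
    (ha1 : ¬ Uniform G X a) (ha2 : ∀ u ∈ X, ¬ Twin G X u a)
    (hb1 : ¬ Uniform G X b) (hb2 : ∀ u ∈ X, ¬ Twin G X u b)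
    (h : ¬ PrimeOn G (insert a (insert b X))) :
    ∀ x ∈ X, (G.Adj x a ↔ G.Adj x b) := by
  obtain ⟨M, hM, ⟨p, hp, hpS, q, hq, hqS, hpq⟩, z, hzS, hz⟩ := not_primeOn h
  have hXS : X ⊆ insert a (insert b X) := fun x hx => by simp [hx]
  have haS : a ∈ insert a (insert b X) := by simp
  have hbS : b ∈ insert a (insert b X) := by simp
  rcases hX.trichotomy (hM.mono hXS) with h0 | ⟨v, hv, hvM, h0⟩ | h0
  · have hab : a ∈ M ∧ b ∈ M := by
      simp only [Set.mem_insert_iff] at hpS hqS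
      grind
    intro y hy
    exact hM y (hXS hy) (h0 y hy) a hab.1 haS b hab.2 hbS
  · have haM : a ∉ M := fun haM => ha2 v hv (hM.twin hXS hv hvM h0 haS haM)
    have hbM : b ∉ M := fun hbM => hb2 v hv (hM.twin hXS hv hvM h0 hbS hbM)
    simp only [Set.mem_insert_iff] at hpS hqS
    grind
  · have haM : a ∈ M := by
      by_contra haM
      exact ha1 (hM.uniform hXS h0 haS haM)
    have hbM : b ∈ M := by
      by_contra hbM
      exact hb1 (hM.uniform hXS h0 hbS hbM)
    simp only [Set.mem_insert_iff] at hzS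
    grind

/-- The Ehrenfeucht–Rozenberg extension theorem. -/
theorem exists_extension (hG : PrimeOn G Set.univ) (hX : PrimeOn G X) (hb : Big X)
    (hout : ∃ a b, a ∉ X ∧ b ∉ X ∧ a ≠ b) :
    ∃ a b, a ∉ X ∧ b ∉ X ∧ a ≠ b ∧ PrimeOn G (insert a (insert b X)) := by
  by_contra hno
  have hno : ∀ a b, a ∉ X → b ∉ X → a ≠ b → ¬ PrimeOn G (insert a (insert b X)) :=
    fun a b h1 h2 h3 h4 => hno ⟨a, b, h1, h2, h3, h4⟩
  obtain ⟨x0, hx0, -, -⟩ := hb hout.choose hout.choose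
  obtain ⟨x1, hx1, hx10, -⟩ := hb x0 x0
  have hU : ∀ a, a ∉ X → ¬ Uniform G X a := by
    intro a ha hau
    rcases hG {b | b ∈ X ∨ ¬ Uniform G X b} (by
      intro v _ hv
      simp only [Set.mem_ofPred_eq, not_or, not_not] at hv
      have key : ∀ y, (y ∈ X ∨ ¬ Uniform G X y) → (G.Adj v y ↔ G.Adj v x0) := by
        intro y hy
        by_cases hyX : y ∈ X
        · exact hv.2 y hyX x0 hx0
        · have hyU := hy.resolve_left hyX
          have hvy : v ≠ y := by
            rintro rfl
            exact hyU hv.2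
          exact uniform_of_not_prime hX hb hv.2 hyU (hno v y hv.1 hyX hvy) x0 hx0
      intro x hx _ y hy _
      exact (key x hx).trans (key y hy).symm) with h | h
    · exact hx10 (h x1 (Or.inl hx1) trivial x0 (Or.inl hx0) trivial)
    · rcases h (Set.mem_univ a) with h | h
      · exact ha h
      · exact h hau
  have hT : ∀ a, a ∉ X → ∀ u ∈ X, ¬ Twin G X u a := by
    intro a ha u hu hau
    rcases hG {b | b = u ∨ (b ∉ X ∧ Twin G X u b)} (by
      intro v _ hv
      simp only [Set.mem_ofPred_eq, not_or, not_and] at hv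
      have key : ∀ y, (y = u ∨ (y ∉ X ∧ Twin G X u y)) → (G.Adj v y ↔ G.Adj v u) := by
        rintro y (rfl | ⟨hyX, hyT⟩)
        · exact Iff.rfl
        · by_cases hvX : v ∈ X
          · exact hyT v hvX hv.1
          · have hvT := hv.2 hvX
            have hvy : y ≠ v := by
              rintro rfl
              exact hvT hyT
            exact twin_of_not_prime hX hb hu hyT hvT (hno y v hyX hvX hvy)
      intro x hx _ y hy _
      exact (key x hx).trans (key y hy).symm) with h | h
    · have := h a (Or.inr ⟨ha, hau⟩) trivial u (Or.inl rfl) trivial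
      exact ha (this ▸ hu)
    · obtain ⟨w, hw, hwu, -⟩ := hb u u
      rcases h (Set.mem_univ w) with h | h
      · exact hwu h
      · exact h.1 hw
  obtain ⟨a, b, ha, hbX, hab⟩ := hout
  rcases hG {b | b ∉ X} (by
    intro v _ hv x hx _ y hy _
    simp only [Set.mem_ofPred_eq, not_not] at hv
    by_cases hxy : x = y
    · rw [hxy]
    · exact pair_of_not_prime hX (hU x hx) (hT x hx) (hU y hy) (hT y hy)
        (hno x y hx hy hxy) v hv) with h | h
  · exact hab (h a ha trivial b hbX trivial)
  · exact h (Set.mem_univ x0) hx0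

end Extension

/-! ### Induced paths on four vertices -/

/-- `a - b - c - d` is an induced path. -/
def IsPath (G : SimpleGraph V) (a b c d : V) : Prop :=
  G.Adj a b ∧ G.Adj b c ∧ G.Adj c d ∧ ¬ G.Adj a c ∧ ¬ G.Adj b d ∧ ¬ G.Adj a d ∧
    a ≠ c ∧ b ≠ d ∧ a ≠ d

theorem IsPath.primeOn {G : SimpleGraph V} {a b c d : V} (h : IsPath G a b c d) :
    PrimeOn G {a, b, c, d} := by
  obtain ⟨h1, h2, h3, h4, h5, h6, h7, h8, h9⟩ := h
  have n1 := h1.ne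
  have n2 := h2.ne
  have n3 := h3.ne
  intro M hM
  have ma := hM a (by simp)
  have mb := hM b (by simp)
  have mc := hM c (by simp)
  have md := hM d (by simp)
  have s1 := h1.symm
  have s2 := h2.symm
  have s3 := h3.symm
  have s4 : ¬ G.Adj c a := fun h => h4 h.symm
  have s5 : ¬ G.Adj d b := fun h => h5 h.symm
  have s6 : ¬ G.Adj d a := fun h => h6 h.symm
  simp only [Set.mem_insert_iff, Set.mem_singleton_iff, Set.insert_subset_iff,
    Set.singleton_subset_iff] at *
  clear hM
  by_cases ca : a ∈ M <;> by_cases cb : b ∈ M <;> by_cases cc : c ∈ M <;> by_cases cd : d ∈ M <;>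
    grind

theorem primeOn_compl {G : SimpleGraph V} (h : PrimeOn G Set.univ) :
    PrimeOn Gᶜ Set.univ := by
  intro M hM
  refine h M fun v hv hvM x hx hxS y hy hyS => ?_
  have := hM v hv hvM x hx hxS y hy hyS
  have h1 : v ≠ x := fun e => hvM (e ▸ hx)
  have h2 : v ≠ y := fun e => hvM (e ▸ hy)
  simp only [SimpleGraph.compl_adj, h1, h2, ne_eq, not_false_eq_true, true_and] at this
  exact not_iff_not.1 this

theorem IsPath.of_compl {G : SimpleGraph V} {a b c d : V} (h : IsPath Gᶜ a b c d) :
    IsPath G b d a c := by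
  unfold IsPath at *
  simp only [SimpleGraph.compl_adj] at h
  grind [G.adj_comm b d, G.adj_comm d a, G.adj_comm b a, G.adj_comm c d, G.adj_comm b c,
    G.adj_comm c b, G.adj_comm d c]

/-- Without an induced four-vertex path, the non-neighbours of a vertex of a prime graph form a
stable set: each component they induce is a module. -/
theorem stable_of_no_path {G : SimpleGraph V} (hG : PrimeOn G Set.univ)
    (hP : ∀ a b c d, ¬ IsPath G a b c d) (v : V) :
    ∀ x y, x ≠ v → y ≠ v → ¬ G.Adj v x → ¬ G.Adj v y → ¬ G.Adj x y := by
  intro x y hxv hyv hvx hvy hxy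
  -- `C` is the component of `x` among the non-neighbours of `v`
  let R : V → V → Prop := fun p q => G.Adj p q ∧ q ≠ v ∧ ¬ G.Adj v q
  let C : Set V := {w | Relation.ReflTransGen R x w}
  have hC : ∀ w ∈ C, w ≠ v ∧ ¬ G.Adj v w := by
    intro w hw
    cases hw with
    | refl => exact ⟨hxv, hvx⟩
    | tail _ h => exact h.2
  have hyC : y ∈ C := Relation.ReflTransGen.single ⟨hxy, hyv, hvy⟩
  have hxC : x ∈ C := Relation.ReflTransGen.refl
  rcases hG C (by
    intro z _ hz
    have key : ∀ w, w ∈ C → (G.Adj z w ↔ G.Adj z x) := by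
      intro w hw
      by_cases hzv : z = v
      · subst hzv
        exact iff_of_false (hC w hw).2 hvx
      by_cases hvz : G.Adj v z
      · induction hw with
        | refl => exact Iff.rfl
        | @tail p q hp hpq ih =>
          rw [← ih]
          have hp' := hC p hp
          -- an edge `p q` of the component distinguished by `z` extends `v - z` to a path
          have e1 := hP v z p q
          have e2 := hP v z q p
          have := hpq.1.ne
          unfold IsPath at e1 e2
          obtain ⟨f1, f2, f3⟩ := hpq
          have := f1.symm
          grind
      · have : ∀ w ∈ C, ¬ G.Adj z w := fun w hw h =>
          hz (Relation.ReflTransGen.tail hw ⟨h.symm, hzv, hvz⟩)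
        exact iff_of_false (this w hw) (this x hxC)
    intro p hp _ q hq _
    exact (key p hp).trans (key q hq).symm) with h | h
  · exact hxy.ne (h x hxC trivial y hyC trivial)
  · exact (hC v (h (Set.mem_univ v))).1 rfl

theorem exists_path [Finite V] [Nonempty V] {G : SimpleGraph V} (hG : PrimeOn G Set.univ)
    (hb : Big (Set.univ : Set V)) : ∃ a b c d, IsPath G a b c d := by
  by_contra hP
  have hP : ∀ a b c d, ¬ IsPath G a b c d := fun a b c d h => hP ⟨a, b, c, d, h⟩
  have hP' : ∀ a b c d, ¬ IsPath Gᶜ a b c d := fun a b c d h => hP _ _ _ _ h.of_compl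
  obtain ⟨v⟩ := ‹Nonempty V›
  have hS := stable_of_no_path hG hP v
  have hK : ∀ x y, G.Adj v x → G.Adj v y → x ≠ y → G.Adj x y := by
    intro x y hx hy hxy
    have := stable_of_no_path (primeOn_compl hG) hP' v x y hx.ne' hy.ne'
      (by simp [hx]) (by simp [hy])
    simpa [hxy] using this
  have hN : {b | b ≠ v ∧ ¬ G.Adj v b}.Nonempty := by
    by_contra hN
    rw [Set.not_nonempty_iff_eq_empty, Set.eq_empty_iff_forall_notMem] at hN
    have hN' : ∀ b, b ≠ v → G.Adj v b := fun b hb => by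
      by_contra hb'
      exact hN b ⟨hb, hb'⟩
    exact hG.no_uniform hb (Set.mem_univ v) fun x _ hx y _ hy => iff_of_true (hN' x hx) (hN' y hy)
  obtain ⟨b, ⟨hbv, hvb⟩, hmin⟩ := Set.exists_min_image {b | b ≠ v ∧ ¬ G.Adj v b}
    (fun b => (G.neighborSet b).ncard) (Set.toFinite _) hN
  by_cases hiso : ∃ a, G.Adj b a
  · obtain ⟨a, hba⟩ := hiso
    have hav : a ≠ v := by
      rintro rfl
      exact hvb hba.symm
    have hva : G.Adj v a := by
      by_contra hva
      exact hS b a hbv hav hvb hva hba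
    -- `a` lies in a minimal neighbourhood, hence in every neighbourhood
    have hdom : ∀ x, x ≠ a → G.Adj a x := by
      intro x hxa
      by_cases hxv : x = v
      · exact hxv ▸ hva.symm
      by_cases hvx : G.Adj v x
      · exact hK a x hva hvx hxa.symm
      by_contra hax
      have hsub : G.neighborSet x ⊆ G.neighborSet b := by
        intro c hc
        by_contra hbc
        have hc : G.Adj x c := hc
        have hbc : ¬ G.Adj b c := hbc
        have hcv : c ≠ v := by
          rintro rfl
          exact hvx hc.symm
        have hvc : G.Adj v c := by
          by_contra hvc
          exact hS x c hxv hcv hvx hvc hc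
        have hac : a ≠ c := by
          rintro rfl
          exact hbc hba
        refine hP b a c x ⟨hba, hK a c hva hvc hac, hc.symm, hbc, hax,
          hS b x hbv hxv hvb hvx, ?_, hxa.symm, ?_⟩
        · rintro rfl
          exact hvb hvc
        · rintro rfl
          exact hax hba.symm
      have hss : G.neighborSet x ⊂ G.neighborSet b :=
        ⟨hsub, fun h => hax (G.adj_symm (h (show a ∈ G.neighborSet b from hba)))⟩
      exact absurd (hmin x ⟨hxv, hvx⟩) (not_le.2 (Set.ncard_lt_ncard hss (Set.toFinite _)))
    exact hG.no_uniform hb (Set.mem_univ a) fun x _ hx y _ hy => iff_of_true (hdom x hx) (hdom y hy)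
  · exact hG.no_uniform hb (Set.mem_univ b) fun x _ _ y _ _ =>
      iff_of_false (fun h => hiso ⟨x, h⟩) (fun h => hiso ⟨y, h⟩)

/-! ### Primality in terms of modules -/

theorem primeOn_of_isPrimeGraph [Fintype V] {G : SimpleGraph V} (hG : IsPrimeGraph G) :
    PrimeOn G Set.univ := by
  classical
  intro M hM
  by_contra hcon
  push Not at hcon
  obtain ⟨⟨x, hx, -, y, hy, -, hxy⟩, hs⟩ := hcon
  obtain ⟨z, -, hz⟩ := Set.not_subset.1 hs
  refine hG ⟨M.toFinset, ?_, ?_, ?_⟩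
  · exact Finset.one_lt_card.2 ⟨x, by simpa using hx, y, by simpa using hy, hxy⟩
  · exact Finset.card_lt_univ_of_notMem (x := z) (by simpa using hz)
  · intro v hv
    rw [Set.mem_toFinset] at hv
    by_cases hvx : G.Adj v x
    · exact Or.inl fun w hw => (hM v trivial hv x hx trivial w (by simpa using hw) trivial).1 hvx
    · exact Or.inr fun w hw h =>
        hvx ((hM v trivial hv x hx trivial w (by simpa using hw) trivial).2 h)

theorem PrimeOn.isPrimeGraph [Fintype V] {G : SimpleGraph V} {s : Finset V}
    [Fintype (s : Set V)] (hs : PrimeOn G (s : Set V)) :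
    IsPrimeGraph (G.induce (s : Set V)) := by
  classical
  rintro ⟨X, h2, hlt, hX⟩
  rcases hs (Subtype.val '' (X : Set (s : Set V))) (by
    rintro v hv hvM _ ⟨x, hx, rfl⟩ - _ ⟨y, hy, rfl⟩ -
    have hvX : (⟨v, hv⟩ : (s : Set V)) ∉ X := fun h => hvM ⟨_, h, rfl⟩
    rcases hX _ hvX with h | h
    · exact iff_of_true (h x hx) (h y hy)
    · exact iff_of_false (h x hx) (h y hy)) with h | h
  · obtain ⟨x, hx, y, hy, hxy⟩ := Finset.one_lt_card.1 h2
    exact hxy (Subtype.ext (h x ⟨x, hx, rfl⟩ x.2 y ⟨y, hy, rfl⟩ y.2))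
  · have : X = Finset.univ := by
      ext x
      obtain ⟨y, hy, hyx⟩ := h x.2
      simpa [← Subtype.ext hyx] using hy
    rw [this, Finset.card_univ] at hlt
    exact lt_irrefl _ hlt

theorem big_of_card {s : Finset V} (h : 3 ≤ s.card) : Big (s : Set V) := by
  classical
  intro u v
  have h2 : ({u, v} : Finset V).card < s.card := lt_of_le_of_lt Finset.card_le_two h
  obtain ⟨w, hw, hn⟩ := Finset.exists_mem_notMem_of_card_lt_card h2
  simp only [Finset.mem_insert, Finset.mem_singleton, not_or] at hn
  exact ⟨w, hw, hn⟩

end SchmerlTrotter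

open SchmerlTrotter

/-- Schmerl–Trotter: every prime graph on `n ≥ 3` vertices contains a prime induced
subgraph on `n-1` or `n-2` vertices. -/
theorem schmerl_trotter {V : Type*} [Fintype V] (G : SimpleGraph V) (n : ℕ)
    (hn : 3 ≤ n) (hcard : Fintype.card V = n) (hG : IsPrimeGraph G) :
    ∃ s : Finset V, (s.card = n - 1 ∨ s.card = n - 2) ∧
      IsPrimeGraph (G.induce ↑s) := by
  classical
  by_cases h4 : n ≤ 4
  · obtain ⟨s, -, hs⟩ := Finset.exists_subset_card_eq (s := (Finset.univ : Finset V)) (n := 2)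
      (by rw [Finset.card_univ]; omega)
    refine ⟨s, by omega, ?_⟩
    rintro ⟨X, h2, hlt, -⟩
    simp only [Finset.coe_sort_coe, Fintype.card_coe] at hlt
    omega
  have hG' := primeOn_of_isPrimeGraph hG
  have hbig : Big (Set.univ : Set V) := by
    simpa using big_of_card (s := (Finset.univ : Finset V)) (by rw [Finset.card_univ]; omega)
  have hne : Nonempty V := Fintype.card_pos_iff.1 (by omega)
  obtain ⟨a, b, c, d, hP⟩ := exists_path hG' hbig
  have hP4 : ({a, b, c, d} : Finset V).card = 4 := by
    obtain ⟨h1, h2, h3, -, -, -, h7, h8, h9⟩ := hP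
    simp [Finset.card_insert_of_notMem, h1.ne, h2.ne, h3.ne, h7, h8, h9]
  obtain ⟨s, hs, hmax⟩ := Finset.exists_max_image
    (Finset.univ.filter fun s : Finset V => PrimeOn G (s : Set V) ∧ 4 ≤ s.card ∧ s.card < n)
    Finset.card ⟨{a, b, c, d}, by
      simp only [Finset.mem_filter, Finset.mem_univ, true_and]
      exact ⟨by simpa using hP.primeOn, by omega, by omega⟩⟩
  simp only [Finset.mem_filter, Finset.mem_univ, true_and] at hs hmax
  obtain ⟨hsP, hs4, hsn⟩ := hs
  refine ⟨s, ?_, PrimeOn.isPrimeGraph hsP⟩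
  by_contra hcon
  have hcc : 1 < sᶜ.card := by
    rw [Finset.card_compl]
    omega
  obtain ⟨p, hp, q, hq, hpq⟩ := Finset.one_lt_card.1 hcc
  rw [Finset.mem_compl] at hp hq
  obtain ⟨p, q, hp, hq, hpq, hpr⟩ := exists_extension hG' hsP (big_of_card (by omega))
    ⟨p, q, by simpa using hp, by simpa using hq, hpq⟩
  have hcard' : (insert p (insert q s)).card = s.card + 2 := by
    rw [Finset.card_insert_of_notMem, Finset.card_insert_of_notMem] <;> simp_all
  have := hmax (insert p (insert q s)) ⟨by simpa using hpr, by omega, by omega⟩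
  omega
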